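/- arXiv:1910.08393 — 2 statements merged into one kernel-verified Lean document; each statement's English description precedes it below -/
import Mathlib

section
/- Let (x;τ)_i := x(x+τ)(x+2τ)⋯(x+(i−1)τ) denote the shifted factorial, and define the (n+1)×(n+1) matrices L, D, U, U′, D′, L′ with entries l_{ij} = (−x)^{i−j} C(n−j, n−i) (γ+jτ;τ)_{i−j} / (α+γ+2jτ;τ)_{i−j}, d_j = x^j (α;τ)_j (α+γ+2jτ;τ)_{n−j} / ((α+γ+(j−1)τ;τ)_j (α+β+γ+(n+j−1)τ;τ)_{n−j}), u_{ij} = (−1)^{j−i} C(j,i) (β+(n−j)τ;τ)_{j−i} / (α+γ+2iτ;τ)_{j−i}, u′_{ij} = (−x^{-1})^{j−i} C(j,i) (β+(n−j)τ;τ)_{j−i} / (α+β+2(n−j)τ;τ)_{j−i}, d′_j = x^j (α+β+2(n−j)τ;τ)_j (α;τ)_{n−j} / ((α+β+γ+(2n−j−1)τ;τ)_j (α+β+(n−j−1)τ;τ)_{n−j}), l′_{ij} = (−1)^{i−j} C(n−j,n−i) (γ+jτ;τ)_{i−j} / (α+β+2(n−i)τ;τ)_{i−j}, where l_{ij}=0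 for i<j, u_{ij}=0 for i>j, etc. Then LDU = U′D′L′ as matrices over the field of rational functions in α, β, γ, τ, x. -/
open scoped BigOperators

/-- The shifted factorial (x;τ)_i = x(x+τ)⋯(x+(i−1)τ). -/
noncomputable def shiftFact (x τ : ℂ) (i : ℕ) : ℂ :=
  ∏ k ∈ Finset.range i, (x + (k : ℂ) * τ)

noncomputable def matL (n : ℕ) (α γ τ x : ℂ) : Matrix (Fin (n + 1)) (Fin (n + 1)) ℂ :=
  Matrix.of fun i j =>
    if (j : ℕ) ≤ (i : ℕ) then
      (-x) ^ ((i : ℕ) - (j : ℕ)) * ((n - (j : ℕ)).choose (n - (i : ℕ)) : ℂ) *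
        shiftFact (γ + ((j : ℕ) : ℂ) * τ) τ ((i : ℕ) - (j : ℕ)) /
          shiftFact (α + γ + 2 * ((j : ℕ) : ℂ) * τ) τ ((i : ℕ) - (j : ℕ))
    else 0

noncomputable def matD (n : ℕ) (α β γ τ x : ℂ) : Matrix (Fin (n + 1)) (Fin (n + 1)) ℂ :=
  Matrix.diagonal fun j =>
    x ^ (j : ℕ) * shiftFact α τ (j : ℕ) * shiftFact (α + γ + 2 * ((j : ℕ) : ℂ) * τ) τ (n - (j : ℕ)) /
      (shiftFact (α + γ + (((j : ℕ) : ℂ) - 1) * τ) τ (j : ℕ) *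
        shiftFact (α + β + γ + ((n : ℂ) + ((j : ℕ) : ℂ) - 1) * τ) τ (n - (j : ℕ)))

noncomputable def matU (n : ℕ) (α β γ τ : ℂ) : Matrix (Fin (n + 1)) (Fin (n + 1)) ℂ :=
  Matrix.of fun i j =>
    if (i : ℕ) ≤ (j : ℕ) then
      (-1 : ℂ) ^ ((j : ℕ) - (i : ℕ)) * ((j : ℕ).choose (i : ℕ) : ℂ) *
        shiftFact (β + ((n : ℂ) - ((j : ℕ) : ℂ)) * τ) τ ((j : ℕ) - (i : ℕ)) /
          shiftFact (α + γ + 2 * ((i : ℕ) : ℂ) * τ) τ ((j : ℕ) - (i : ℕ))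
    else 0

noncomputable def matU' (n : ℕ) (α β τ x : ℂ) : Matrix (Fin (n + 1)) (Fin (n + 1)) ℂ :=
  Matrix.of fun i j =>
    if (i : ℕ) ≤ (j : ℕ) then
      (-x⁻¹) ^ ((j : ℕ) - (i : ℕ)) * ((j : ℕ).choose (i : ℕ) : ℂ) *
        shiftFact (β + ((n : ℂ) - ((j : ℕ) : ℂ)) * τ) τ ((j : ℕ) - (i : ℕ)) /
          shiftFact (α + β + 2 * ((n : ℂ) - ((j : ℕ) : ℂ)) * τ) τ ((j : ℕ) - (i : ℕ))
    else 0

noncomputable def matD' (n : ℕ) (α β γ τ x : ℂ) : Matrix (Fin (n + 1)) (Fin (n + 1)) ℂ :=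
  Matrix.diagonal fun j =>
    x ^ (j : ℕ) * shiftFact (α + β + 2 * ((n : ℂ) - ((j : ℕ) : ℂ)) * τ) τ (j : ℕ) *
        shiftFact α τ (n - (j : ℕ)) /
      (shiftFact (α + β + γ + (2 * (n : ℂ) - ((j : ℕ) : ℂ) - 1) * τ) τ (j : ℕ) *
        shiftFact (α + β + ((n : ℂ) - ((j : ℕ) : ℂ) - 1) * τ) τ (n - (j : ℕ)))

noncomputable def matL' (n : ℕ) (α β γ τ : ℂ) : Matrix (Fin (n + 1)) (Fin (n + 1)) ℂ :=
  Matrix.of fun i j =>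
    if (j : ℕ) ≤ (i : ℕ) then
      (-1 : ℂ) ^ ((i : ℕ) - (j : ℕ)) * ((n - (j : ℕ)).choose (n - (i : ℕ)) : ℂ) *
        shiftFact (γ + ((j : ℕ) : ℂ) * τ) τ ((i : ℕ) - (j : ℕ)) /
          shiftFact (α + β + 2 * ((n : ℂ) - ((i : ℕ) : ℂ)) * τ) τ ((i : ℕ) - (j : ℕ))
    else 0


open Finset

theorem shiftFact_zero (x τ : ℂ) : shiftFact x τ 0 = 1 := by simp [shiftFact]

theorem shiftFact_succ (x τ : ℂ) (m : ℕ) :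
    shiftFact x τ (m + 1) = shiftFact x τ m * (x + m * τ) := by
  simp [shiftFact, prod_range_succ]

theorem shiftFact_add (x τ : ℂ) (m k : ℕ) :
    shiftFact x τ (m + k) = shiftFact x τ m * shiftFact (x + m * τ) τ k := by
  simp only [shiftFact, prod_range_add]
  congr 1
  refine prod_congr rfl fun t _ => ?_
  push_cast; ring

theorem shiftFact_succ' (x τ : ℂ) (m : ℕ) :
    shiftFact x τ (m + 1) = x * shiftFact (x + τ) τ m := by
  rw [add_comm, shiftFact_add]
  simp [shiftFact]

theorem shiftFact_ne_zero {x y τ : ℂ} (h : ∀ c : ℤ, x + c * τ ≠ 0) (c : ℤ)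
    (hy : y = x + c * τ) (m : ℕ) : shiftFact y τ m ≠ 0 := by
  refine prod_ne_zero_iff.mpr fun k _ => ?_
  have := h (c + k)
  push_cast at this
  rw [hy]
  convert this using 1
  ring

theorem shiftFact_one_mul_factorial (p m : ℕ) :
    shiftFact ((p : ℂ) + 1) 1 m * (p.factorial : ℂ) = ((p + m).factorial : ℂ) := by
  induction m with
  | zero => simp [shiftFact_zero]
  | succ m ih =>
    rw [shiftFact_succ, ← add_assoc, Nat.factorial_succ]
    push_cast
    rw [← ih]
    ring

theorem cast_choose_succ_mul (q r : ℕ) :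
    (q.choose (r + 1) : ℂ) * (r + 1) = q.choose r * ((q : ℂ) - r) := by
  rcases le_or_gt r q with h | h
  · have := Nat.choose_succ_right_eq q r
    rw [← Nat.cast_sub h]
    exact_mod_cast this
  · simp [Nat.choose_eq_zero_of_lt h, Nat.choose_eq_zero_of_lt (h.trans r.lt_succ_self)]

theorem shiftFact_neg_one (q r : ℕ) :
    shiftFact (-(q : ℂ)) 1 r = (-1) ^ r * r.factorial * q.choose r := by
  induction r with
  | zero => simp [shiftFact_zero]
  | succ r ih =>
    rw [shiftFact_succ, ih, Nat.factorial_succ]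
    push_cast
    linear_combination (-1 : ℂ) ^ r * r.factorial * cast_choose_succ_mul q r

theorem exists_choose_eq (s t : ℕ) : ∃ e : ℂ,
    ((s + 1 + t).choose s : ℂ) = (s + 1) * e ∧
    ((s + 1 + t).choose (s + 1) : ℂ) = (t + 1) * e ∧
    ((s + 1 + t + 1).choose (s + 1) : ℂ) = (s + t + 2) * e := by
  have h0 : (s : ℂ) + 1 ≠ 0 := by exact_mod_cast s.succ_ne_zero
  have h := cast_choose_succ_mul (s + 1 + t) s
  have h1 : ((s + 1 + t).choose (s + 1) : ℂ) =
      (t + 1) * (((s + 1 + t).choose s : ℂ) / (s + 1)) := by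
    field_simp
    push_cast at h
    linear_combination h
  refine ⟨((s + 1 + t).choose s : ℂ) / (s + 1), by field_simp, h1, ?_⟩
  rw [Nat.choose_succ_succ, Nat.cast_add, h1]
  field_simp
  ring

theorem sum_range_of_pascal {m : ℕ} {f P Q : ℕ → ℂ} (h0 : f 0 = P 0)
    (hs : ∀ s < m, f (s + 1) = P (s + 1) + Q s) (hm : f (m + 1) = Q m) :
    ∑ s ∈ range (m + 2), f s = ∑ s ∈ range (m + 1), (P s + Q s) := by
  rw [sum_range_succ', sum_range_succ, hm, h0, sum_congr rfl fun s h => hs s (mem_range.mp h),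
    sum_add_distrib, sum_add_distrib, sum_range_succ' P, sum_range_succ Q]
  ring

/-- Newton expansion of a product of linear factors in `k (A + (k - 1) τ)`, an instance of the
Pfaff–Saalschütz summation. -/
theorem newton_expansion (A p k τ : ℂ) (N : ℕ) :
    shiftFact (p + 1 - k) 1 N * shiftFact (A + (k + p) * τ) τ N =
      ∑ r ∈ range (N + 1), (N.choose r : ℂ) * shiftFact (p + 1) 1 (N - r) *
        shiftFact (A + (p + r) * τ) τ (N - r) *
        (shiftFact (-k) 1 r * shiftFact (A + (k - 1) * τ) τ r) := by
  induction N with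
  | zero => simp [shiftFact_zero]
  | succ N ih =>
    set c : ℕ → ℕ → ℂ := fun N r => (N.choose r : ℂ) * shiftFact (p + 1) 1 (N - r) *
        shiftFact (A + (p + r) * τ) τ (N - r) with hc
    set e : ℕ → ℂ := fun r => shiftFact (-k) 1 r * shiftFact (A + (k - 1) * τ) τ r with he
    rw [sum_range_of_pascal (P := fun r => (p + 1 + N - r) * (A + (p + N + r) * τ) * c N r * e r)
      (Q := fun r => c N r * e (r + 1))]
    · rw [shiftFact_succ, shiftFact_succ, mul_mul_mul_comm, ih, sum_mul]
      refine sum_congr rfl fun r _ => ?_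
      simp only [hc, he, shiftFact_succ]
      ring
    · simp only [hc, he, Nat.sub_zero, shiftFact_succ, Nat.choose_zero_right]
      push_cast
      ring
    · intro s hs
      obtain ⟨t, rfl⟩ := Nat.exists_eq_add_of_le (Nat.succ_le_of_lt hs)
      obtain ⟨w, h0, h1, h2⟩ := exists_choose_eq s t
      have e1 : s + 1 + t + 1 - (s + 1) = t + 1 := by omega
      have e2 : s + 1 + t - (s + 1) = t := by omega
      have e3 : s + 1 + t - s = t + 1 := by omega
      have e4 : A + (p + s) * τ + τ = A + (p + (s + 1)) * τ := by ring
      simp only [hc, Nat.succ_eq_add_one, e1, e2, e3, h0, h1, h2]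
      rw [shiftFact_succ' (A + (p + s) * τ), e4, shiftFact_succ, shiftFact_succ]
      push_cast
      ring
    · simp [hc, he, shiftFact_zero]

/-- A terminating very-well-poised `₅F₄` summation. -/
theorem very_well_poised_sum {α γ τ : ℂ} (b : ℂ) (h : ∀ c : ℤ, α + γ + c * τ ≠ 0) (m : ℕ) :
    ∑ s ∈ range (m + 1), (m.choose s : ℂ) * (α + γ + (2 * s - 1) * τ) * shiftFact α τ s *
        shiftFact (α + γ + b + (m - 1) * τ) τ s * shiftFact (γ + s * τ) τ (m - s) *
        shiftFact b τ (m - s) / shiftFact (α + γ + (s - 1) * τ) τ (m + 1) =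
      shiftFact (α + b) τ m := by
  induction m with
  | zero =>
    have := h (-1)
    push_cast at this
    simp [shiftFact]
    simpa using this
  | succ m ih =>
    set F : ℕ → ℕ → ℂ := fun m s => (m.choose s : ℂ) * (α + γ + (2 * s - 1) * τ) *
        shiftFact α τ s * shiftFact (α + γ + b + (m - 1) * τ) τ s *
        shiftFact (γ + s * τ) τ (m - s) * shiftFact b τ (m - s) /
          shiftFact (α + γ + (s - 1) * τ) τ (m + 1) with hF
    set Q : ℕ → ℂ := fun s => (m.choose s : ℂ) * shiftFact α τ (s + 1) *
        shiftFact (α + γ + b + m * τ) τ s * (α + γ + b + 2 * m * τ) *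
        shiftFact (γ + s * τ) τ (m - s) * shiftFact b τ (m - s) /
          shiftFact (α + γ + s * τ) τ (m + 1) with hQ
    have key := sum_range_of_pascal (m := m) (f := F (m + 1))
      (P := fun s => (α + b + m * τ) * F m s - Q s) (Q := Q) ?_ ?_ ?_
    · rw [shiftFact_succ, ← ih, sum_mul]
      refine key.trans (sum_congr rfl fun s _ => ?_)
      ring
    · have n1 := h (-1)
      have n2 := h m
      have n3 := shiftFact_ne_zero h 0 (by simp : α + γ = _) m
      push_cast at n1 n2
      simp only [hF, hQ, Nat.sub_zero, Nat.choose_zero_right, shiftFact_zero]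
      have e1 : α + γ + (((0 : ℕ) : ℂ) - 1) * τ + τ = α + γ := by push_cast; ring
      rw [shiftFact_succ' (α + γ + _) τ (m + 1), shiftFact_succ' (α + γ + _) τ m, e1]
      simp only [shiftFact_succ, shiftFact_zero, zero_add]
      push_cast
      have n4 : α + γ + (0 - 1) * τ ≠ 0 := by convert n1 using 2; ring
      have e6 : α + γ + (2 * 0 - 1) * τ = α + γ + (0 - 1) * τ := by ring
      simp only [e6, zero_mul, add_zero]
      generalize shiftFact (α + γ) τ m = E at *
      generalize hu : α + γ + (0 - 1) * τ = u at *
      generalize hv : α + γ + m * τ = v at *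
      field_simp
      rw [← hv]
      ring
    · intro s hs
      obtain ⟨t, rfl⟩ := Nat.exists_eq_add_of_le (Nat.succ_le_of_lt hs)
      obtain ⟨w, h0, h1, h2⟩ := exists_choose_eq s t
      have e1 : s + 1 + t + 1 - (s + 1) = t + 1 := by omega
      have e2 : s + 1 + t - (s + 1) = t := by omega
      have e3 : s + 1 + t - s = t + 1 := by omega
      have e4 : γ + s * τ + τ = γ + (s + 1) * τ := by ring
      have e5 : α + γ + s * τ + τ = α + γ + (s + 1) * τ := by ring
      have e6 : α + γ + b + (s + 1 + t - 1) * τ + τ = α + γ + b + (s + 1 + t) * τ := by ring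
      have n1 := h s
      have n2 := h (s + 1 + (s + 1 + t))
      have n4 := shiftFact_ne_zero h (s + 1) rfl (s + 1 + t)
      push_cast at n1 n2 n4
      simp only [hF, hQ, Nat.succ_eq_add_one, e1, e2, e3, h0, h1, h2]
      push_cast
      have e7 : α + γ + (s + 1 - 1 : ℂ) * τ = α + γ + s * τ := by ring
      have e8 : α + γ + b + (s + 1 + t + 1 - 1 : ℂ) * τ = α + γ + b + (s + 1 + t) * τ := by ring
      rw [e7, e8, shiftFact_succ' (α + γ + b + (s + 1 + t - 1) * τ), e6,
        shiftFact_succ (α + γ + b + (s + 1 + t) * τ),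
        shiftFact_succ' (γ + s * τ), e4, shiftFact_succ (γ + _), shiftFact_succ b,
        shiftFact_succ α τ (s + 1), shiftFact_succ' (α + γ + s * τ) τ (s + 1 + t + 1),
        shiftFact_succ' (α + γ + s * τ) τ (s + 1 + t), e5, shiftFact_succ (α + γ + _)]
      push_cast
      have n5 : α + γ + (s + 1) * τ + (s + 1 + t) * τ ≠ 0 := by convert n2 using 1; ring
      generalize shiftFact (α + γ + (s + 1) * τ) τ (s + 1 + t) = E at *
      generalize hu : α + γ + s * τ = u at *
      generalize hv : α + γ + (s + 1) * τ + (s + 1 + t) * τ = v at *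
      field_simp
      subst hv hu
      ring
    · have n1 := h (m + (m + 1))
      have n2 := shiftFact_ne_zero h m rfl (m + 1)
      push_cast at n1 n2
      simp only [hF, hQ, Nat.sub_self, Nat.choose_self, shiftFact_zero]
      push_cast
      have e7 : α + γ + (m + 1 - 1 : ℂ) * τ = α + γ + m * τ := by ring
      have e8 : α + γ + b + (m + 1 - 1 : ℂ) * τ = α + γ + b + m * τ := by ring
      rw [e7, e8, shiftFact_succ (α + γ + _) τ (m + 1), shiftFact_succ (α + γ + b + _)]
      push_cast
      have n5 : α + γ + m * τ + (m + 1) * τ ≠ 0 := by convert n1 using 1; ring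
      generalize shiftFact (α + γ + m * τ) τ (m + 1) = E at *
      generalize hv : α + γ + m * τ + (m + 1) * τ = v at *
      field_simp
      subst hv
      ring

theorem shifted_very_well_poised_sum {α γ τ : ℂ} (b : ℂ) (h : ∀ c : ℤ, α + γ + c * τ ≠ 0)
    (q r : ℕ) :
    ∑ k ∈ range (q + 1), (q.choose k : ℂ) *
        (shiftFact (-k) 1 r * shiftFact (α + γ + (k - 1) * τ) τ r) *
        shiftFact (γ + k * τ) τ (q - k) * shiftFact b τ (q - k) * shiftFact α τ k *
        shiftFact (α + γ + b + (q - 1) * τ) τ k /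
          (shiftFact (α + γ + 2 * k * τ) τ (q - k) * shiftFact (α + γ + (k - 1) * τ) τ k) =
      shiftFact (-q) 1 r * shiftFact α τ r * shiftFact (α + γ + b + (q - 1) * τ) τ r *
        shiftFact (α + b + r * τ) τ (q - r) := by
  rcases lt_or_ge q r with hqr | hqr
  · rw [shiftFact_neg_one, Nat.choose_eq_zero_of_lt hqr]
    simp only [Nat.cast_zero, mul_zero, zero_mul]
    refine sum_eq_zero fun k hk => ?_
    rw [shiftFact_neg_one,
      Nat.choose_eq_zero_of_lt ((Nat.lt_succ_iff.mp (mem_range.mp hk)).trans_lt hqr)]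
    simp
  obtain ⟨m, rfl⟩ := Nat.exists_eq_add_of_le hqr
  have h' : ∀ c : ℤ, α + r * τ + (γ + r * τ) + c * τ ≠ 0 := fun c => by
    have := h (2 * r + c)
    push_cast at this
    convert this using 1
    ring
  have hV := very_well_poised_sum b h' m
  have eα : α + b + r * τ = α + r * τ + b := by ring
  rw [add_assoc r m 1, sum_range_add, sum_eq_zero, zero_add, Nat.add_sub_cancel_left, eα, ← hV,
    mul_sum]
  · refine sum_congr rfl fun s hs => ?_
    obtain ⟨t, rfl⟩ := Nat.exists_eq_add_of_le (Nat.lt_succ_iff.mp (mem_range.mp hs))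
    have hch : ((r + (s + t)).choose (r + s) : ℂ) * (r + s).choose r =
        (r + (s + t)).choose r * (s + t).choose s := by
      have := Nat.choose_mul (n := r + (s + t)) (k := r + s) (s := r) (by omega)
      rw [Nat.add_sub_cancel_left, Nat.add_sub_cancel_left] at this
      exact_mod_cast this
    have e1 : r + (s + t) - (r + s) = t := by omega
    have e2 : s + t - s = t := by omega
    rw [e1, e2, shiftFact_neg_one, shiftFact_neg_one, shiftFact_add α, shiftFact_add _ τ r s,
      shiftFact_add (_ + (_ - 1) * τ) τ r s, add_assoc s t 1, add_comm t 1,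
      shiftFact_add _ τ s (1 + t), add_comm 1 t, shiftFact_succ' _ τ t]
    push_cast
    have a1 : α + γ + (r + s - 1) * τ + r * τ = α + r * τ + (γ + r * τ) + (s - 1) * τ := by ring
    have a2 : α + r * τ + (γ + r * τ) + (s - 1) * τ + s * τ =
        α + r * τ + (γ + r * τ) + (2 * s - 1) * τ := by ring
    have a3 : α + r * τ + (γ + r * τ) + (2 * s - 1) * τ + τ = α + γ + 2 * (r + s) * τ := by ring
    have a4 : α + γ + b + (r + (s + t) - 1) * τ + r * τ =
        α + r * τ + (γ + r * τ) + b + (s + t - 1) * τ := by ring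
    have a5 : γ + r * τ + s * τ = γ + (r + s) * τ := by ring
    rw [a1, a2, a3, a4, a5]
    have n1 := shiftFact_ne_zero h (r + s - 1) (y := α + γ + (r + s - 1) * τ) (by push_cast; ring) r
    have n2 := shiftFact_ne_zero h' (s - 1) (y := α + r * τ + (γ + r * τ) + (s - 1) * τ)
      (by push_cast; ring) s
    have n3 := shiftFact_ne_zero h (2 * (r + s)) (y := α + γ + 2 * (r + s) * τ)
      (by push_cast; ring) t
    have n4 := h' (2 * s - 1)
    push_cast at n4
    generalize α + r * τ + (γ + r * τ) + (2 * s - 1) * τ = v at *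
    generalize shiftFact (α + γ + (r + s - 1) * τ) τ r = E1 at *
    generalize shiftFact (α + r * τ + (γ + r * τ) + (s - 1) * τ) τ s = E2 at *
    generalize shiftFact (α + γ + 2 * (r + s) * τ) τ t = E3 at *
    generalize shiftFact (α + r * τ + (γ + r * τ) + b + (s + t - 1) * τ) τ s = X1
    generalize shiftFact (α + γ + b + (r + (s + t) - 1) * τ) τ r = X2
    generalize ((r + (s + t)).choose (r + s) : ℂ) = c1 at *
    generalize ((r + (s + t)).choose r : ℂ) = c2 at *
    field_simp
    linear_combination r.factorial * shiftFact (γ + (r + s) * τ) τ t * shiftFact b τ t *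
      shiftFact α τ r * shiftFact (α + r * τ) τ s * X1 * X2 * hch
  · intro k hk
    rw [shiftFact_neg_one, Nat.choose_eq_zero_of_lt (mem_range.mp hk)]
    simp

/-- The balanced `₄F₃` sum common to the entries of both Gauss decompositions. -/
noncomputable def balancedSum (q d e : ℕ) (α β γ τ : ℂ) : ℂ :=
  ∑ r ∈ range (q + e + 1), (-1) ^ r * (r.factorial : ℂ) * ((q + d + e - r).factorial : ℂ) *
    (e.choose r * q.choose r) * (shiftFact (α + γ + (q + d + r) * τ) τ (e - r) *
    shiftFact (α + β + (d + e + r) * τ) τ (q - r)) * shiftFact α τ r *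
    shiftFact (α + β + γ + (q + d + e - 1) * τ) τ r

theorem balancedSum_comm (q d e : ℕ) (α β γ τ : ℂ) :
    balancedSum q d e α β γ τ = balancedSum e d q α γ β τ := by
  rw [balancedSum, balancedSum, add_comm q e]
  refine sum_congr rfl fun r _ => ?_
  have e1 : e + d + q = q + d + e := by omega
  have e2 : α + γ + β + ((e : ℂ) + d + q - 1) * τ = α + β + γ + (q + d + e - 1) * τ := by ring
  have e3 : (e : ℂ) + d + r = d + e + r := by ring
  have e4 : (q : ℂ) + d + r = d + q + r := by ring
  rw [e1, e2, e3, e4]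
  ring

theorem sum_mul_factorial_eq_balancedSum {α γ τ : ℂ} (β : ℂ) (h : ∀ c : ℤ, α + γ + c * τ ≠ 0)
    (q d e : ℕ) :
    (∑ k ∈ range (q + 1), (q.choose k : ℂ) *
        (shiftFact ((q + d : ℂ) + 1 - k) 1 e * shiftFact (α + γ + (k + (q + d)) * τ) τ e) *
        shiftFact (γ + k * τ) τ (q - k) * shiftFact (β + (d + e) * τ) τ (q - k) *
        shiftFact α τ k * shiftFact (α + β + γ + (q + d + e - 1) * τ) τ k /
          (shiftFact (α + γ + 2 * k * τ) τ (q - k) * shiftFact (α + γ + (k - 1) * τ) τ k)) *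
        ((q + d).factorial : ℂ) =
      balancedSum q d e α β γ τ := by
  have ec : α + β + γ + (q + d + e - 1) * τ = α + γ + (β + (d + e) * τ) + (q - 1) * τ := by ring
  simp only [newton_expansion, mul_sum, sum_mul, sum_div]
  rw [sum_comm, balancedSum, add_comm q e, add_right_comm e q 1, sum_range_add _ (e + 1) q,
    sum_eq_zero (s := range q), add_zero]
  · refine sum_congr rfl fun r hr => ?_
    obtain ⟨t, rfl⟩ := Nat.exists_eq_add_of_le (Nat.lt_succ_iff.mp (mem_range.mp hr))
    have hS := shifted_very_well_poised_sum (β + (d + (r + t : ℕ)) * τ) h q r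
    have hf := shiftFact_one_mul_factorial (q + d) t
    have e1 : q + d + (r + t) - r = q + d + t := by omega
    have e2 : r + t - r = t := by omega
    have e3 : α + (β + (d + (r + t : ℕ)) * τ) + r * τ = α + β + (d + (r + t : ℕ) + r) * τ := by
      ring
    rw [← ec, e3, shiftFact_neg_one] at hS
    push_cast at hf
    rw [e1, e2, ← hf]
    rw [add_assoc (q : ℂ) d] at hf
    trans (((r + t).choose r : ℂ) * shiftFact (q + d + 1) 1 t *
      shiftFact (α + γ + (q + d + r) * τ) τ t) * (q + d).factorial *
        ((-1) ^ r * r.factorial * q.choose r * shiftFact α τ r *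
          shiftFact (α + β + γ + (q + d + (r + t : ℕ) - 1) * τ) τ r *
          shiftFact (α + β + (d + (r + t : ℕ) + r) * τ) τ (q - r))
    · rw [← hS, mul_sum]
      refine sum_congr rfl fun k _ => ?_
      ring
    · ring
  · intro r _
    rw [Nat.choose_eq_zero_of_lt (by omega : e < e + 1 + r)]
    simp

theorem sum_fin_eq_sum_range {n q : ℕ} (hq : q ≤ n) {f : Fin (n + 1) → ℂ} {g : ℕ → ℂ}
    (hfg : ∀ k : Fin (n + 1), (k : ℕ) ≤ q → f k = g k)
    (h0 : ∀ k : Fin (n + 1), q < (k : ℕ) → f k = 0) :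
    ∑ k, f k = ∑ k ∈ range (q + 1), g k := by
  have h : ∀ k : Fin (n + 1), f k = if (k : ℕ) ∈ range (q + 1) then g k else 0 := fun k => by
    split_ifs with hk <;> rw [mem_range, Nat.lt_succ_iff] at hk
    exacts [hfg k hk, h0 k (not_le.mp hk)]
  rw [sum_congr rfl fun k _ => h k,
    Fin.sum_univ_eq_sum_range (fun k => if k ∈ range (q + 1) then g k else 0), sum_ite_mem,
    inter_eq_right.mpr (range_mono (Nat.succ_le_succ hq))]

theorem ldu_apply {n : ℕ} (α β γ τ x : ℂ) {q : ℕ} {i j : Fin (n + 1)}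
    (hq : ∀ k, k ≤ (i : ℕ) ∧ k ≤ (j : ℕ) ↔ k ≤ q) :
    (matL n α γ τ x * matD n α β γ τ x * matU n α β γ τ) i j =
      ∑ k ∈ range (q + 1), (-x) ^ ((i : ℕ) - k) * ((n - k).choose (n - i) : ℂ) *
        shiftFact (γ + k * τ) τ (i - k) / shiftFact (α + γ + 2 * k * τ) τ (i - k) *
        (x ^ k * shiftFact α τ k * shiftFact (α + γ + 2 * k * τ) τ (n - k) /
          (shiftFact (α + γ + (k - 1) * τ) τ k *
            shiftFact (α + β + γ + (n + k - 1) * τ) τ (n - k))) *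
        ((-1) ^ ((j : ℕ) - k) * ((j : ℕ).choose k : ℂ) *
          shiftFact (β + (n - (j : ℕ)) * τ) τ (j - k) /
            shiftFact (α + γ + 2 * k * τ) τ (j - k)) := by
  rw [matD, Matrix.mul_apply]
  simp only [Matrix.mul_diagonal, matL, matU, Matrix.of_apply]
  refine sum_fin_eq_sum_range (((hq q).mpr le_rfl).1.trans i.is_le) (fun k hk => ?_) fun k hk => ?_
  · obtain ⟨hi, hj⟩ := (hq k).mpr hk
    rw [if_pos hi, if_pos hj]
  · rcases not_and_or.mp (mt (hq k).mp hk.not_ge) with h | h <;> simp [h]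

theorem choose_mul_factorial_eq_shiftFact (p e : ℕ) :
    ((p + e).choose e : ℂ) * e.factorial = shiftFact (p + 1) 1 e := by
  have hp : (p.factorial : ℂ) ≠ 0 := by exact_mod_cast p.factorial_ne_zero
  apply mul_right_cancel₀ hp
  rw [shiftFact_one_mul_factorial, mul_right_comm]
  have := Nat.add_choose_mul_factorial_mul_factorial p e
  exact_mod_cast this

theorem choose_mul_choose_mul_factorial (k m d e : ℕ) :
    ((m + d + e).choose (d + e) : ℂ) * (k + m + d).choose k *
        ((d + e).factorial * (k + m).factorial) =
      (k + m).choose k * shiftFact ((m + d : ℕ) + 1) 1 e * (k + m + d).factorial := by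
  have h1 := Nat.add_choose_mul_factorial_mul_factorial m (d + e)
  have h2 := Nat.add_choose_mul_factorial_mul_factorial (m + d) k
  have h3 := Nat.add_choose_mul_factorial_mul_factorial m k
  have h4 := shiftFact_one_mul_factorial (m + d) e
  rw [← add_assoc] at h1
  rw [add_comm (m + d) k, ← add_assoc] at h2
  rw [add_comm m k] at h3
  have f1 : (m.factorial : ℂ) ≠ 0 := by exact_mod_cast m.factorial_ne_zero
  have f2 : ((m + d).factorial : ℂ) ≠ 0 := by exact_mod_cast (m + d).factorial_ne_zero
  have f3 : (k.factorial : ℂ) ≠ 0 := by exact_mod_cast k.factorial_ne_zero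
  rw [← h1] at h4
  rw [← h2, ← h3]
  push_cast at h4 ⊢
  apply mul_right_cancel₀ f1
  linear_combination (-((k + m + d).choose k : ℂ) * k.factorial * (k + m).choose k *
    m.factorial) * h4

theorem ldu_apply_of_ge {α β γ τ : ℂ} (x : ℂ) (h1 : ∀ c : ℤ, α + γ + c * τ ≠ 0)
    (h3 : ∀ c : ℤ, α + β + γ + c * τ ≠ 0) {n q d e : ℕ} (hn : n = q + d + e)
    {i j : Fin (n + 1)} (hi : (i : ℕ) = q + d) (hj : (j : ℕ) = q) :
    (matL n α γ τ x * matD n α β γ τ x * matU n α β γ τ) i j =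
      (-1) ^ d * x ^ (q + d) * shiftFact (γ + q * τ) τ d /
        (shiftFact (α + β + γ + (q + d + e - 1) * τ) τ n * e.factorial * (q + d).factorial) *
        balancedSum q d e α β γ τ := by
  have hf1 : (e.factorial : ℂ) ≠ 0 := by exact_mod_cast e.factorial_ne_zero
  have hf2 : ((q + d).factorial : ℂ) ≠ 0 := by exact_mod_cast (q + d).factorial_ne_zero
  rw [ldu_apply α β γ τ x (q := q) (by omega), ← sum_mul_factorial_eq_balancedSum β h1 q d e,
    hi, hj, mul_comm (∑ k ∈ _, _) ((q + d).factorial : ℂ), ← mul_assoc, mul_sum]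
  refine sum_congr rfl fun k hk => ?_
  obtain ⟨m, rfl⟩ := Nat.exists_eq_add_of_le (Nat.lt_succ_iff.mp (mem_range.mp hk))
  have e1 : k + m + d - k = m + d := by omega
  have e2 : k + m - k = m := by omega
  have e3 : n - k = m + d + e := by omega
  have e4 : n - (k + m + d) = e := by omega
  have hnc : (n : ℂ) = k + m + d + e := by exact_mod_cast hn
  have hch := choose_mul_factorial_eq_shiftFact (m + d) e
  have hn' : n = k + (m + d + e) := by omega
  rw [e1, e2, e3, e4, hnc, shiftFact_add _ τ (m + d) e, shiftFact_add (γ + k * τ) τ m d,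
    show shiftFact (α + β + γ + ((k + m : ℕ) + d + e - 1) * τ) τ n = _ from by
      rw [hn', shiftFact_add]]
  push_cast at hch ⊢
  have a1 : α + γ + 2 * k * τ + (m + d) * τ = α + γ + (k + (k + m + d)) * τ := by ring
  have a2 : α + β + γ + (k + m + d + e - 1) * τ + k * τ =
    α + β + γ + (k + m + d + e + k - 1) * τ := by ring
  have a3 : γ + k * τ + m * τ = γ + (k + m) * τ := by ring
  have a4 : (k : ℂ) + m + d + e - (k + m) = d + e := by ring
  have a5 : (k : ℂ) + m + d + 1 - k = m + d + 1 := by ring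
  rw [a1, a2, a3, a4, a5, ← hch]
  have n1 := shiftFact_ne_zero h1 (2 * k) (y := α + γ + 2 * k * τ) (by push_cast; ring) (m + d)
  have n2 := shiftFact_ne_zero h1 (2 * k) (y := α + γ + 2 * k * τ) (by push_cast; ring) m
  have n3 := shiftFact_ne_zero h1 (k - 1) (y := α + γ + (k - 1) * τ) (by push_cast; ring) k
  have n4 := shiftFact_ne_zero h3 (k + m + d + e - 1)
    (y := α + β + γ + (k + m + d + e - 1) * τ) (by push_cast; ring) k
  have n5 := shiftFact_ne_zero h3 (k + m + d + e + k - 1)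
    (y := α + β + γ + (k + m + d + e + k - 1) * τ) (by push_cast; ring) (m + d + e)
  have hs : (-x) ^ (m + d) * x ^ k * (-1) ^ m = (-1) ^ d * x ^ (k + m + d) := by
    rw [neg_pow x, pow_add (-1 : ℂ), add_assoc k, pow_add x k]
    linear_combination (-1 : ℂ) ^ d * x ^ (m + d) * x ^ k *
      (Even.neg_one_pow ⟨m, rfl⟩ : (-1 : ℂ) ^ (m + m) = 1)
  generalize shiftFact (α + γ + 2 * k * τ) τ (m + d) = E1 at *
  generalize shiftFact (α + γ + 2 * k * τ) τ m = E2 at *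
  generalize shiftFact (α + γ + (k - 1) * τ) τ k = E3 at *
  generalize shiftFact (α + β + γ + (k + m + d + e - 1) * τ) τ k = E4 at *
  generalize shiftFact (α + β + γ + (k + m + d + e + k - 1) * τ) τ (m + d + e) = E5 at *
  rw [← hs]
  generalize (-x) ^ (m + d) = p1
  generalize x ^ k = p2
  generalize (-1 : ℂ) ^ m = p3
  field_simp

theorem ldu_apply_of_le {α β γ τ : ℂ} (x : ℂ) (h1 : ∀ c : ℤ, α + γ + c * τ ≠ 0)
    (h3 : ∀ c : ℤ, α + β + γ + c * τ ≠ 0) {n q d e : ℕ} (hn : n = q + d + e)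
    {i j : Fin (n + 1)} (hi : (i : ℕ) = q) (hj : (j : ℕ) = q + d) :
    (matL n α γ τ x * matD n α β γ τ x * matU n α β γ τ) i j =
      (-1) ^ d * x ^ q * shiftFact (β + e * τ) τ d /
        (shiftFact (α + β + γ + (q + d + e - 1) * τ) τ n * q.factorial * (d + e).factorial) *
        balancedSum q d e α β γ τ := by
  have hf1 : (q.factorial : ℂ) ≠ 0 := by exact_mod_cast q.factorial_ne_zero
  have hf2 : ((d + e).factorial : ℂ) ≠ 0 := by exact_mod_cast (d + e).factorial_ne_zero
  rw [ldu_apply α β γ τ x (q := q) (by omega), ← sum_mul_factorial_eq_balancedSum β h1 q d e,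
    hi, hj, mul_comm (∑ k ∈ _, _) ((q + d).factorial : ℂ), ← mul_assoc, mul_sum]
  refine sum_congr rfl fun k hk => ?_
  obtain ⟨m, rfl⟩ := Nat.exists_eq_add_of_le (Nat.lt_succ_iff.mp (mem_range.mp hk))
  have e1 : k + m + d - k = d + m := by omega
  have e2 : k + m - k = m := by omega
  have e3 : n - k = d + m + e := by omega
  have e4 : n - (k + m) = d + e := by omega
  have hnc : (n : ℂ) = k + m + d + e := by exact_mod_cast hn
  have hch := choose_mul_choose_mul_factorial k m d e
  have hn' : n = k + (d + m + e) := by omega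
  rw [add_comm m d] at hch
  rw [e1, e2, e3, e4, hnc, shiftFact_add _ τ (d + m) e,
    shiftFact_add (β + _) τ d m,
    show shiftFact (α + β + γ + ((k + m : ℕ) + d + e - 1) * τ) τ n = _ from by
      rw [hn', shiftFact_add]]
  push_cast at hch ⊢
  have a1 : α + γ + 2 * k * τ + (d + m) * τ = α + γ + (k + (k + m + d)) * τ := by ring
  have a2 : α + β + γ + (k + m + d + e - 1) * τ + k * τ =
    α + β + γ + (k + m + d + e + k - 1) * τ := by ring
  have a3 : β + e * τ + d * τ = β + (d + e) * τ := by ring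
  have a4 : (k : ℂ) + m + d + e - (k + m + d) = e := by ring
  have a5 : (k : ℂ) + m + d + 1 - k = d + m + 1 := by ring
  rw [a1, a2, a4, a3, a5]
  have n1 := shiftFact_ne_zero h1 (2 * k) (y := α + γ + 2 * k * τ) (by push_cast; ring) (d + m)
  have n2 := shiftFact_ne_zero h1 (2 * k) (y := α + γ + 2 * k * τ) (by push_cast; ring) m
  have n3 := shiftFact_ne_zero h1 (k - 1) (y := α + γ + (k - 1) * τ) (by push_cast; ring) k
  have n4 := shiftFact_ne_zero h3 (k + m + d + e - 1)
    (y := α + β + γ + (k + m + d + e - 1) * τ) (by push_cast; ring) k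
  have n5 := shiftFact_ne_zero h3 (k + m + d + e + k - 1)
    (y := α + β + γ + (k + m + d + e + k - 1) * τ) (by push_cast; ring) (d + m + e)
  have hs : (-x) ^ m * x ^ k * (-1) ^ (d + m) = (-1) ^ d * x ^ (k + m) := by
    rw [neg_pow x, pow_add (-1 : ℂ), pow_add x k]
    linear_combination (-1 : ℂ) ^ d * x ^ m * x ^ k *
      (Even.neg_one_pow ⟨m, rfl⟩ : (-1 : ℂ) ^ (m + m) = 1)
  generalize shiftFact (α + γ + 2 * k * τ) τ (d + m) = E1 at *
  generalize shiftFact (α + γ + 2 * k * τ) τ m = E2 at *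
  generalize shiftFact (α + γ + (k - 1) * τ) τ k = E3 at *
  generalize shiftFact (α + β + γ + (k + m + d + e - 1) * τ) τ k = E4 at *
  generalize shiftFact (α + β + γ + (k + m + d + e + k - 1) * τ) τ (d + m + e) = E5 at *
  rw [← hs]
  generalize (-x) ^ m = p1
  generalize x ^ k = p2
  generalize (-1 : ℂ) ^ (d + m) = p3
  generalize ((d + m + e).choose (d + e) : ℂ) = c1 at *
  generalize ((k + m + d).choose k : ℂ) = c2 at *
  generalize shiftFact (α + γ + (k + (k + m + d)) * τ) τ e = X1
  generalize shiftFact (β + e * τ) τ d = X2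
  generalize shiftFact (β + (d + e) * τ) τ m = X3
  field_simp
  linear_combination p1 * p2 * p3 * shiftFact (γ + k * τ) τ m * shiftFact α τ k *
    X1 * X2 * X3 * hch

theorem pow_add_mul_inv_pow {x : ℂ} (hx : x ≠ 0) (a b : ℕ) : x ^ (a + b) * x⁻¹ ^ b = x ^ a := by
  rw [pow_add, mul_assoc, ← mul_pow, mul_inv_cancel₀ hx, one_pow, mul_one]

theorem matU'_eq_submatrix (n : ℕ) (α β τ x : ℂ) :
    matU' n α β τ x = (matL n α β τ x⁻¹).submatrix Fin.revPerm Fin.revPerm := by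
  ext i j
  have hi := i.is_le
  have hj := j.is_le
  have e1 : n - (n - (j : ℕ)) = j := by omega
  have e2 : n - (n - (i : ℕ)) = i := by omega
  have e3 : n - (i : ℕ) - (n - j) = j - i := by omega
  simp [matU', matL, Fin.val_rev, e1, e2, e3, Nat.cast_sub hj]

theorem matL'_eq_submatrix (n : ℕ) (α β γ τ : ℂ) :
    matL' n α β γ τ = (matU n α γ β τ).submatrix Fin.revPerm Fin.revPerm := by
  ext i j
  have hi := i.is_le
  have hj := j.is_le
  have e3 : n - (j : ℕ) - (n - i) = i - j := by omega
  simp [matL', matU, Fin.val_rev, e3, Nat.cast_sub hi, Nat.cast_sub hj]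

theorem matD'_eq_submatrix (n : ℕ) (α β γ τ : ℂ) {x : ℂ} (hx : x ≠ 0) :
    matD' n α β γ τ x = x ^ n • (matD n α γ β τ x⁻¹).submatrix Fin.revPerm Fin.revPerm := by
  rw [matD', matD, Matrix.submatrix_diagonal_equiv, ← Matrix.diagonal_smul]
  congr 1
  ext j
  have hj := j.is_le
  obtain ⟨t, ht⟩ := Nat.exists_eq_add_of_le hj
  have hc : (n : ℂ) = j + t := by exact_mod_cast ht
  have e1 : n - (j : ℕ) = t := by omega
  have e2 : n + 1 - ((j : ℕ) + 1) = t := by omega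
  have e3 : n - t = j := by omega
  have hp : x ^ n * x⁻¹ ^ t = x ^ (j : ℕ) := by
    rw [← pow_add_mul_inv_pow hx j t, ← ht]
  simp only [Pi.smul_apply, Function.comp_apply, Fin.revPerm_apply, Fin.val_rev, smul_eq_mul, e1,
    e2, e3, ← hp, hc]
  have a1 : α + γ + β + ((j : ℂ) + t + t - 1) * τ = α + β + γ + (2 * (j + t) - j - 1) * τ := by ring
  have a2 : (j : ℂ) + t - j = t := by ring
  rw [a1, a2]
  ring

theorem udl_eq_submatrix (n : ℕ) (α β γ τ : ℂ) {x : ℂ} (hx : x ≠ 0) :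
    matU' n α β τ x * matD' n α β γ τ x * matL' n α β γ τ =
      x ^ n • (matL n α β τ x⁻¹ * matD n α γ β τ x⁻¹ * matU n α γ β τ).submatrix
        Fin.revPerm Fin.revPerm := by
  rw [matU'_eq_submatrix, matL'_eq_submatrix, matD'_eq_submatrix n α β γ τ hx, Matrix.mul_smul,
    Matrix.smul_mul, Matrix.submatrix_mul_equiv, Matrix.submatrix_mul_equiv]

/-- The two Gauss decompositions LDU = U′D′L′ of the coefficient matrix M of the
difference system for the Selberg-type integral agree, for generic parameters. -/
theorem gauss_decompositions_agree (n : ℕ) (α β γ τ x : ℂ) (hx : x ≠ 0)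
    (h1 : ∀ c : ℤ, α + γ + (c : ℂ) * τ ≠ 0)
    (h2 : ∀ c : ℤ, α + β + (c : ℂ) * τ ≠ 0)
    (h3 : ∀ c : ℤ, α + β + γ + (c : ℂ) * τ ≠ 0) :
    matL n α γ τ x * matD n α β γ τ x * matU n α β γ τ =
      matU' n α β τ x * matD' n α β γ τ x * matL' n α β γ τ := by
  ext i j
  have h1' : ∀ c : ℤ, α + γ + β + c * τ ≠ 0 := fun c => by rw [add_right_comm α]; exact h3 c
  rw [udl_eq_submatrix n α β γ τ hx, Matrix.smul_apply, Matrix.submatrix_apply, smul_eq_mul]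
  have hi := i.is_le
  have hj := j.is_le
  have hpow : ∀ a b : ℕ, n = a + b → x ^ n * x⁻¹ ^ b = x ^ a := fun a b hab => by
    rw [← pow_add_mul_inv_pow hx a b, ← hab]
  rcases le_total (j : ℕ) i with hij | hij
  · obtain ⟨d, hd⟩ := Nat.exists_eq_add_of_le hij
    obtain ⟨e, he⟩ := Nat.exists_eq_add_of_le hi
    rw [ldu_apply_of_ge x h1 h3 (he.trans (by rw [hd])) hd rfl,
      ldu_apply_of_le x⁻¹ h2 h1' (q := e) (d := d) (e := j) (by omega)
        (by simp [Fin.val_rev]; omega) (by simp [Fin.val_rev]; omega),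
      balancedSum_comm, ← hpow (j + d) e (by omega)]
    have a1 : α + γ + β + ((e : ℂ) + d + (j : ℕ) - 1) * τ =
      α + β + γ + ((j : ℕ) + d + e - 1) * τ := by ring
    rw [a1, add_comm d]
    ring
  · obtain ⟨d, hd⟩ := Nat.exists_eq_add_of_le hij
    obtain ⟨e, he⟩ := Nat.exists_eq_add_of_le hj
    rw [ldu_apply_of_le x h1 h3 (he.trans (by rw [hd])) rfl hd,
      ldu_apply_of_ge x⁻¹ h2 h1' (q := e) (d := d) (e := i) (by omega)
        (by simp [Fin.val_rev]; omega) (by simp [Fin.val_rev]; omega),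
      balancedSum_comm, ← hpow i (e + d) (by omega)]
    have a1 : α + γ + β + ((e : ℂ) + d + (i : ℕ) - 1) * τ =
      α + β + γ + ((i : ℕ) + d + e - 1) * τ := by ring
    rw [a1, add_comm d]
    ring
end

section
/- Let ξ_j(x,a₂;t) = (x, xt, …, xt^{j−1}, a₂, a₂t, …, a₂t^{n−j−1}). Then for 0 ≤ i,j ≤ n, f_i(a₁,a₂;t; ξ_j(x,a₂;t)) = C_{t^{-1}}(j,i) · (xa₁^{-1};t)_{j−i} (xa₂^{-1}t^{-(n−j)};t)_i / ((a₁^{-1}a₂t^{n−j−i};t)_{j−i} (a₁a₂^{-1}t^{-(n−i)};t)_i), where C_{t^{-1}}(j,i) is the t^{-1}-binomial coefficient; in particular the left side vanishes when i > j. -/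
open scoped BigOperators

/-- The k-th element (0-indexed) of a finite set of naturals, listed increasingly. -/
def sortedEl (I : Finset ℕ) (k : ℕ) : ℕ := (I.sort (· ≤ ·)).getD k 0

/-- The Lagrange interpolation polynomial of type A:
f_r(a₁,a₂;t;z) = ∑_{I⊆{1,…,n},|I|=r} ∏_{k=1}^{r}(z_{i_k}−a₂t^{i_k−k})/(a₁t^{k−1}−a₂t^{i_k−k})
  ∏_{l=1}^{n−r}(z_{j_l}−a₁t^{j_l−l})/(a₂t^{l−1}−a₁t^{j_l−l}),
where I = {i₁<⋯<i_r} and {1,…,n}∖I = {j₁<⋯<j_{n−r}}; z is indexed by 1,…,n. -/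
noncomputable def lagrangeF (a₁ a₂ t : ℂ) (n r : ℕ) (z : ℕ → ℂ) : ℂ :=
  ∑ I ∈ Finset.powersetCard r (Finset.Icc 1 n),
    (∏ k ∈ Finset.range r,
        (z (sortedEl I k) - a₂ * t ^ (sortedEl I k - (k + 1))) /
          (a₁ * t ^ k - a₂ * t ^ (sortedEl I k - (k + 1)))) *
      ∏ l ∈ Finset.range (n - r),
        (z (sortedEl ((Finset.Icc 1 n) \ I) l) -
            a₁ * t ^ (sortedEl ((Finset.Icc 1 n) \ I) l - (l + 1))) /
          (a₂ * t ^ l - a₁ * t ^ (sortedEl ((Finset.Icc 1 n) \ I) l - (l + 1)))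

/-- The c-shifted factorial (x;c)_k = (1−x)(1−cx)⋯(1−c^{k−1}x). -/
noncomputable def qPoch (x c : ℂ) (k : ℕ) : ℂ :=
  ∏ i ∈ Finset.range k, (1 - c ^ i * x)

/-- The c-binomial coefficient, zero when k > m. -/
noncomputable def qBinom (c : ℂ) (m k : ℕ) : ℂ :=
  if k ≤ m then qPoch c c m / (qPoch c c (m - k) * qPoch c c k) else 0

/-- The point ξ_j(x,a₂;t) = (x, xt, …, xt^{j−1}, a₂, a₂t, …, a₂t^{n−j−1}), indexed by 1,…,n. -/
noncomputable def xiXNode (x a₂ t : ℂ) (j : ℕ) : ℕ → ℂ :=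
  fun k => if k ≤ j then x * t ^ (k - 1) else a₂ * t ^ (k - j - 1)

lemma sort_insert_of_lt {I : Finset ℕ} {m : ℕ} (h : ∀ b ∈ I, b < m) :
    (insert m I).sort (· ≤ ·) = I.sort (· ≤ ·) ++ [m] := by
  have hm : m ∉ I := fun hm => lt_irrefl _ (h m hm)
  refine List.Perm.eq_of_pairwise' (r := (· ≤ ·)) (Finset.pairwise_sort _ _) ?_ ?_
  · refine List.pairwise_append.2 ⟨Finset.pairwise_sort _ _, List.pairwise_singleton _ _, ?_⟩
    intro a ha b hb
    rw [List.mem_singleton.1 hb]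
    exact (h a ((Finset.mem_sort _).1 ha)).le
  · refine (List.perm_ext_iff_of_nodup (Finset.sort_nodup _ _) ?_).2 fun a => ?_
    · refine List.nodup_append.2 ⟨Finset.sort_nodup _ _, List.nodup_singleton _, ?_⟩
      intro a ha b hb
      rw [List.mem_singleton.1 hb]
      exact (h a ((Finset.mem_sort _).1 ha)).ne
    · simp [or_comm]

lemma sortedEl_insert_of_lt_card {I : Finset ℕ} {m k : ℕ} (h : ∀ b ∈ I, b < m)
    (hk : k < I.card) : sortedEl (insert m I) k = sortedEl I k := by
  unfold sortedEl
  rw [sort_insert_of_lt h, List.getD_append _ _ _ _ (by simpa using hk)]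

lemma sortedEl_insert_card {I : Finset ℕ} {m k : ℕ} (h : ∀ b ∈ I, b < m)
    (hk : I.card = k) : sortedEl (insert m I) k = m := by
  unfold sortedEl
  rw [sort_insert_of_lt h, List.getD_append_right _ _ _ _ (by simp [hk])]
  simp [hk]

lemma prod_sortedEl_insert {I : Finset ℕ} {m k : ℕ} (h : ∀ b ∈ I, b < m) (hk : I.card = k)
    (g : ℕ → ℕ → ℂ) :
    ∏ l ∈ Finset.range (k + 1), g (sortedEl (insert m I) l) l =
      (∏ l ∈ Finset.range k, g (sortedEl I l) l) * g m k := by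
  rw [Finset.prod_range_succ, sortedEl_insert_card h hk]
  congr 1
  refine Finset.prod_congr rfl fun l hl => ?_
  rw [sortedEl_insert_of_lt_card h (by simpa [hk] using hl)]

lemma lagrangeF_eq_zero {a₁ a₂ t : ℂ} {n r : ℕ} {z : ℕ → ℂ} (h : n < r) :
    lagrangeF a₁ a₂ t n r z = 0 := by
  unfold lagrangeF
  rw [Finset.powersetCard_eq_empty.2 (by simpa using h), Finset.sum_empty]

lemma Icc_one_succ (n : ℕ) : Finset.Icc 1 (n + 1) = insert (n + 1) (Finset.Icc 1 n) :=
  (Finset.insert_Icc_right_eq_Icc_add_one (by omega)).symm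

/-- The part of the sum where the last index is not selected. -/
lemma sum_lagrangeF_of_notMem (a₁ a₂ t : ℂ) (n r : ℕ) (z : ℕ → ℂ) :
    (∑ I ∈ Finset.powersetCard r (Finset.Icc 1 n),
    (∏ k ∈ Finset.range r,
        (z (sortedEl I k) - a₂ * t ^ (sortedEl I k - (k + 1))) /
          (a₁ * t ^ k - a₂ * t ^ (sortedEl I k - (k + 1)))) *
      ∏ l ∈ Finset.range (n + 1 - r),
        (z (sortedEl ((Finset.Icc 1 (n + 1)) \ I) l) -
            a₁ * t ^ (sortedEl ((Finset.Icc 1 (n + 1)) \ I) l - (l + 1))) /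
          (a₂ * t ^ l - a₁ * t ^ (sortedEl ((Finset.Icc 1 (n + 1)) \ I) l - (l + 1)))) =
    (z (n + 1) - a₁ * t ^ r) / (a₂ * t ^ (n - r) - a₁ * t ^ r) * lagrangeF a₁ a₂ t n r z := by
  unfold lagrangeF
  rw [Finset.mul_sum]
  refine Finset.sum_congr rfl fun I hI => ?_
  obtain ⟨hs, hc⟩ := Finset.mem_powersetCard.1 hI
  have hr : r ≤ n := by simpa [hc] using Finset.card_le_card hs
  have hn : n + 1 ∉ I := fun h => by simpa using hs h
  have hcard : (Finset.Icc 1 n \ I).card = n - r := by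
    rw [Finset.card_sdiff_of_subset hs, hc]; simp
  have hlt : ∀ b ∈ Finset.Icc 1 n \ I, b < n + 1 := fun b hb => by
    have := (Finset.mem_Icc.1 (Finset.mem_sdiff.1 hb).1).2
    omega
  rw [Icc_one_succ, Finset.insert_sdiff_of_notMem _ hn, show n + 1 - r = n - r + 1 by omega,
    prod_sortedEl_insert hlt hcard
      (fun e l => (z e - a₁ * t ^ (e - (l + 1))) / (a₂ * t ^ l - a₁ * t ^ (e - (l + 1)))),
    show n + 1 - (n - r + 1) = r by omega]
  ring

lemma lagrangeF_succ_zero (a₁ a₂ t : ℂ) (n : ℕ) (z : ℕ → ℂ) :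
    lagrangeF a₁ a₂ t (n + 1) 0 z =
      (z (n + 1) - a₁) / (a₂ * t ^ n - a₁) * lagrangeF a₁ a₂ t n 0 z := by
  have h := sum_lagrangeF_of_notMem a₁ a₂ t n 0 z
  rw [Finset.powersetCard_zero] at h
  simp only [pow_zero, mul_one, Nat.sub_zero] at h
  rw [← h, lagrangeF, Finset.powersetCard_zero]
  rfl

lemma lagrangeF_succ_succ (a₁ a₂ t : ℂ) (n r : ℕ) (z : ℕ → ℂ) :
    lagrangeF a₁ a₂ t (n + 1) (r + 1) z =
      (z (n + 1) - a₂ * t ^ (n - r)) / (a₁ * t ^ r - a₂ * t ^ (n - r)) *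
        lagrangeF a₁ a₂ t n r z +
      (z (n + 1) - a₁ * t ^ (r + 1)) / (a₂ * t ^ (n - (r + 1)) - a₁ * t ^ (r + 1)) *
        lagrangeF a₁ a₂ t n (r + 1) z := by
  have hnot : n + 1 ∉ Finset.Icc 1 n := by simp
  rw [← sum_lagrangeF_of_notMem, lagrangeF]
  rw [show Finset.powersetCard (r + 1) (Finset.Icc 1 (n + 1)) = _ by
    rw [Icc_one_succ, Finset.powersetCard_succ_insert hnot]]
  rw [Finset.sum_union, add_comm]
  · congr 1
    rw [Finset.sum_image]
    · rw [lagrangeF, Finset.mul_sum]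
      refine Finset.sum_congr rfl fun I hI => ?_
      obtain ⟨hs, hc⟩ := Finset.mem_powersetCard.1 hI
      have hlt : ∀ b ∈ I, b < n + 1 := fun b hb => by
        have := (Finset.mem_Icc.1 (hs hb)).2
        omega
      rw [prod_sortedEl_insert hlt hc
        (fun e l => (z e - a₂ * t ^ (e - (l + 1))) / (a₁ * t ^ l - a₂ * t ^ (e - (l + 1)))),
        Icc_one_succ, Finset.insert_sdiff_insert, Finset.sdiff_insert_of_notMem hnot,
        Nat.add_sub_add_right]
      ring
    · intro I hI J hJ h
      have hI' : n + 1 ∉ I := fun h' => hnot ((Finset.mem_powersetCard.1 hI).1 h')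
      have hJ' : n + 1 ∉ J := fun h' => hnot ((Finset.mem_powersetCard.1 hJ).1 h')
      rw [← Finset.erase_insert hI', ← Finset.erase_insert hJ', h]
  · refine Finset.disjoint_left.2 fun I hI hI' => ?_
    obtain ⟨J, -, rfl⟩ := Finset.mem_image.1 hI'
    exact hnot ((Finset.mem_powersetCard.1 hI).1 (Finset.mem_insert_self _ _))

lemma qPoch_succ (y c : ℂ) (k : ℕ) : qPoch y c (k + 1) = qPoch y c k * (1 - c ^ k * y) :=
  Finset.prod_range_succ _ _

lemma qPoch_succ_left (y c : ℂ) (k : ℕ) :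
    qPoch y c (k + 1) = (1 - y) * qPoch (c * y) c k := by
  unfold qPoch
  rw [Finset.prod_range_succ', mul_comm]
  simp [pow_succ, mul_assoc]

lemma qPoch_zero (y c : ℂ) : qPoch y c 0 = 1 := Finset.prod_range_zero _

lemma qPoch_self_ne_zero {c : ℂ} (hc : ∀ k : ℕ, 1 - c ^ (k + 1) ≠ 0) (k : ℕ) :
    qPoch c c k ≠ 0 :=
  Finset.prod_ne_zero_iff.2 fun i _ => by simpa [pow_succ] using hc i

lemma qBinom_zero_right {c : ℂ} (hc : ∀ k : ℕ, 1 - c ^ (k + 1) ≠ 0) (m : ℕ) :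
    qBinom c m 0 = 1 := by
  simp [qBinom, qPoch_zero, qPoch_self_ne_zero hc]

lemma qBinom_self {c : ℂ} (hc : ∀ k : ℕ, 1 - c ^ (k + 1) ≠ 0) (m : ℕ) :
    qBinom c m m = 1 := by
  simp [qBinom, qPoch_zero, qPoch_self_ne_zero hc]

lemma qBinom_pred_right {c : ℂ} (hc : ∀ k : ℕ, 1 - c ^ (k + 1) ≠ 0) (i p : ℕ) :
    qBinom c (i + (p + 1)) i =
      qBinom c (i + 1 + p) (i + 1) * (1 - c ^ (i + 1)) / (1 - c ^ (p + 1)) := by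
  have h1 := hc i
  have h2 := hc p
  have h3 := qPoch_self_ne_zero hc i
  have h4 := qPoch_self_ne_zero hc p
  have e : ∀ k, qPoch c c (k + 1) = qPoch c c k * (1 - c ^ (k + 1)) := fun k => by
    rw [qPoch_succ, pow_succ]
  rw [qBinom, qBinom, if_pos (by omega), if_pos (by omega), Nat.add_sub_cancel_left,
    Nat.add_sub_cancel_left, show i + (p + 1) = i + 1 + p by omega, e p, e i]
  field_simp

lemma qBinom_succ_left {c : ℂ} (hc : ∀ k : ℕ, 1 - c ^ (k + 1) ≠ 0) (i p : ℕ) :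
    qBinom c (i + (p + 1)) i = qBinom c (i + p) i * (1 - c ^ (i + p + 1)) / (1 - c ^ (p + 1)) := by
  have h2 := hc p
  have h3 := qPoch_self_ne_zero hc i
  have h4 := qPoch_self_ne_zero hc p
  have e : ∀ k, qPoch c c (k + 1) = qPoch c c k * (1 - c ^ (k + 1)) := fun k => by
    rw [qPoch_succ, pow_succ]
  rw [qBinom, qBinom, if_pos (by omega), if_pos (by omega), Nat.add_sub_cancel_left,
    Nat.add_sub_cancel_left, ← add_assoc, e p, e (i + p)]
  field_simp

lemma qPoch_shift_succ (y c : ℂ) (k : ℕ) (hy : 1 - y ≠ 0) :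
    qPoch (c * y) c (k + 1) =
      qPoch y c k * ((1 - c ^ k * y) * (1 - c ^ k * c * y) / (1 - y)) := by
  rw [mul_div_assoc', eq_div_iff hy, ← mul_assoc, ← qPoch_succ, ← pow_succ, ← qPoch_succ,
    qPoch_succ_left _ _ (k + 1), mul_comm]

lemma qPoch_eq_shift (y c : ℂ) (k : ℕ) (hy : 1 - c ^ k * y ≠ 0) :
    qPoch y c k = qPoch (c * y) c k * ((1 - y) / (1 - c ^ k * y)) := by
  rw [mul_div_assoc', eq_div_iff hy, ← qPoch_succ, qPoch_succ_left, mul_comm]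

/-- The closed form of the evaluation at `ξ_j` of the `i`-th Lagrange polynomial in `n` variables,
with `j = i + p` and `n = i + p + q`. -/
noncomputable def xiValue (a₁ a₂ t x : ℂ) (i p q : ℕ) : ℂ :=
  qBinom t⁻¹ (i + p) i * (qPoch (x / a₁) t p * qPoch (x / (a₂ * t ^ q)) t i /
    (qPoch (a₂ * t ^ q / (a₁ * t ^ i)) t p * qPoch (a₁ / (a₂ * t ^ (p + q))) t i))

section Scalar

variable {a₁ a₂ t x : ℂ}

lemma sub_ne_zero_of_generic (hgen : ∀ k l : ℤ, a₁ * t ^ k ≠ a₂ * t ^ l) (k l : ℕ) :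
    a₁ * t ^ k - a₂ * t ^ l ≠ 0 := by
  simpa [sub_eq_zero] using hgen k l

lemma one_sub_inv_pow_ne_zero (hroot : ∀ m : ℤ, m ≠ 0 → t ^ m ≠ 1) (k : ℕ) :
    1 - t⁻¹ ^ (k + 1) ≠ 0 := by
  have h := hroot (-((k + 1 : ℕ) : ℤ)) (by omega)
  rw [zpow_neg, zpow_natCast, ← inv_pow] at h
  exact sub_ne_zero.2 h.symm

/-- The relation behind the recurrence when the last variable is `a₂ t^q`. -/
lemma xiValue_scalar_geometric {u v w : ℂ} (ha₁ : a₁ ≠ 0) (ha₂ : a₂ ≠ 0) (ht : t ≠ 0)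
    (hu : u ≠ 0) (hv : v ≠ 0) (hw : w ≠ 0) (hvt : v * t - 1 ≠ 0)
    (h1 : a₁ * u - a₂ * (v * w * t) ≠ 0) (h2 : a₁ * u - a₂ * (v * w) ≠ 0)
    (h3 : a₁ * (u * t) - a₂ * (v * w) ≠ 0) (h4 : a₁ * (u * t) - a₂ * w ≠ 0)
    (h5 : a₁ - a₂ * (v * w * t) ≠ 0) :
    (1 - x / (a₂ * (w * t))) / (1 - u * (a₁ / (a₂ * (v * w * t)))) =
      (a₂ * w - a₂ * (v * w * t)) / (a₁ * u - a₂ * (v * w * t)) *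
          ((1 - (u * t)⁻¹) / (1 - (v * t)⁻¹)) * (1 - v * (x / a₁)) /
            (1 - v * (a₂ * w / (a₁ * u))) +
        (a₂ * w - a₁ * (u * t)) / (a₂ * (v * w) - a₁ * (u * t)) *
          (1 - u * (x / (a₂ * w))) /
            ((1 - a₂ * w / (a₁ * (u * t))) / (1 - v * (a₂ * w / (a₁ * (u * t)))) *
              ((1 - u * (a₁ / (a₂ * (v * w * t)))) * (1 - u * t * (a₁ / (a₂ * (v * w * t)))) /
                (1 - a₁ / (a₂ * (v * w * t))))) := by
  have e1 : 1 - u * (a₁ / (a₂ * (v * w * t))) =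
      -(a₁ * u - a₂ * (v * w * t)) / (a₂ * (v * w * t)) := by field_simp; ring
  have e2 : 1 - (v * t)⁻¹ = (v * t - 1) / (v * t) := by field_simp
  have e3 : 1 - v * (a₂ * w / (a₁ * u)) = (a₁ * u - a₂ * (v * w)) / (a₁ * u) := by
    field_simp
  have e4 : 1 - a₂ * w / (a₁ * (u * t)) = (a₁ * (u * t) - a₂ * w) / (a₁ * (u * t)) := by
    field_simp
  have e5 : 1 - v * (a₂ * w / (a₁ * (u * t))) =
      (a₁ * (u * t) - a₂ * (v * w)) / (a₁ * (u * t)) := by field_simp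
  have e6 : 1 - u * t * (a₁ / (a₂ * (v * w * t))) =
      -(a₁ * u - a₂ * (v * w)) / (a₂ * (v * w)) := by field_simp; ring
  have e7 : 1 - a₁ / (a₂ * (v * w * t)) = -(a₁ - a₂ * (v * w * t)) / (a₂ * (v * w * t)) := by
    field_simp; ring
  have e8 : a₂ * (v * w) - a₁ * (u * t) = -(a₁ * (u * t) - a₂ * (v * w)) := by ring
  rw [e1, e2, e3, e4, e5, e6, e7, e8]
  generalize k1 : a₁ * u - a₂ * (v * w * t) = k1' at *
  generalize k2 : a₁ * u - a₂ * (v * w) = k2' at *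
  generalize k3 : a₁ * (u * t) - a₂ * (v * w) = k3' at *
  generalize k4 : a₁ * (u * t) - a₂ * w = k4' at *
  generalize k5 : a₁ - a₂ * (v * w * t) = k5' at *
  generalize k6 : v * t - 1 = k6' at *
  field_simp
  subst k1 k2 k3 k4 k5 k6
  ring

/-- The relation behind the recurrence when the last variable is `x t^(n - 1)`. -/
lemma xiValue_scalar_full {u v : ℂ} (ha₁ : a₁ ≠ 0) (ha₂ : a₂ ≠ 0) (ht : t ≠ 0)
    (hu : u ≠ 0) (hv : v ≠ 0) (hvt : v * t - 1 ≠ 0)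
    (h1 : a₁ * u - a₂ * (v * t) ≠ 0) (h2 : a₁ * u - a₂ * v ≠ 0)
    (h3 : a₁ * (u * t) - a₂ * v ≠ 0) (h4 : a₁ * (u * t) - a₂ ≠ 0)
    (h5 : a₁ - a₂ * (v * t) ≠ 0) :
    (1 - (u * t * v * t)⁻¹) / (1 - (v * t)⁻¹) * (1 - v * (x / a₁)) * (1 - u * (x / a₂)) /
        ((1 - a₂ / (a₁ * (u * t))) * (1 - u * (a₁ / (a₂ * (v * t))))) =
      (x * (u * v * t) - a₂ * (v * t)) / (a₁ * u - a₂ * (v * t)) *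
          ((1 - (u * t)⁻¹) / (1 - (v * t)⁻¹)) * (1 - v * (x / a₁)) /
            (1 - v * (a₂ / (a₁ * u))) +
        (x * (u * v * t) - a₁ * (u * t)) / (a₂ * v - a₁ * (u * t)) *
          (1 - u * (x / a₂)) /
            ((1 - a₂ / (a₁ * (u * t))) / (1 - v * (a₂ / (a₁ * (u * t)))) *
              ((1 - u * (a₁ / (a₂ * (v * t)))) * (1 - u * t * (a₁ / (a₂ * (v * t)))) /
                (1 - a₁ / (a₂ * (v * t))))) := by
  have e1 : 1 - u * (a₁ / (a₂ * (v * t))) =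
      -(a₁ * u - a₂ * (v * t)) / (a₂ * (v * t)) := by field_simp; ring
  have e2 : 1 - (v * t)⁻¹ = (v * t - 1) / (v * t) := by field_simp
  have e3 : 1 - v * (a₂ / (a₁ * u)) = (a₁ * u - a₂ * v) / (a₁ * u) := by
    field_simp
  have e4 : 1 - a₂ / (a₁ * (u * t)) = (a₁ * (u * t) - a₂) / (a₁ * (u * t)) := by
    field_simp
  have e5 : 1 - v * (a₂ / (a₁ * (u * t))) =
      (a₁ * (u * t) - a₂ * v) / (a₁ * (u * t)) := by field_simp
  have e6 : 1 - u * t * (a₁ / (a₂ * (v * t))) =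
      -(a₁ * u - a₂ * v) / (a₂ * v) := by field_simp; ring
  have e7 : 1 - a₁ / (a₂ * (v * t)) = -(a₁ - a₂ * (v * t)) / (a₂ * (v * t)) := by
    field_simp; ring
  have e8 : a₂ * v - a₁ * (u * t) = -(a₁ * (u * t) - a₂ * v) := by ring
  rw [e1, e2, e3, e4, e5, e6, e7, e8]
  generalize k1 : a₁ * u - a₂ * (v * t) = k1' at *
  generalize k2 : a₁ * u - a₂ * v = k2' at *
  generalize k3 : a₁ * (u * t) - a₂ * v = k3' at *
  generalize k4 : a₁ * (u * t) - a₂ = k4' at *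
  generalize k5 : a₁ - a₂ * (v * t) = k5' at *
  generalize k6 : v * t - 1 = k6' at *
  field_simp
  subst k1 k2 k3 k4 k5 k6
  ring

lemma one_sub_mul_div_ne_zero {a b c : ℂ} (hb : b ≠ 0) (h : b - c * a ≠ 0) :
    1 - c * (a / b) ≠ 0 := by
  rw [show 1 - c * (a / b) = (b - c * a) / b by field_simp]
  exact div_ne_zero h hb

lemma xiValue_geometric_succ (ha₁ : a₁ ≠ 0) (ha₂ : a₂ ≠ 0) (ht : t ≠ 0)
    (hgen : ∀ k l : ℤ, a₁ * t ^ k ≠ a₂ * t ^ l) (hroot : ∀ m : ℤ, m ≠ 0 → t ^ m ≠ 1)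
    (i p q : ℕ) :
    xiValue a₁ a₂ t x (i + 1) p (q + 1) =
      (a₂ * t ^ q - a₂ * t ^ (p + q + 1)) / (a₁ * t ^ i - a₂ * t ^ (p + q + 1)) *
          xiValue a₁ a₂ t x i (p + 1) q +
        (a₂ * t ^ q - a₁ * t ^ (i + 1)) / (a₂ * t ^ (p + q) - a₁ * t ^ (i + 1)) *
          xiValue a₁ a₂ t x (i + 1) p q := by
  have hg := sub_ne_zero_of_generic hgen
  have hu := pow_ne_zero i ht
  have hv := pow_ne_zero p ht
  have hw := pow_ne_zero q ht
  have hvt : t ^ p * t - 1 ≠ 0 := by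
    rw [← pow_succ]
    exact sub_ne_zero.2 (mod_cast hroot (p + 1 : ℕ) (by omega))
  have h1 := hg i (p + q + 1)
  have h2 := hg i (p + q)
  have h3 := hg (i + 1) (p + q)
  have h4 := hg (i + 1) q
  have h5 := hg 0 (p + q + 1)
  simp only [pow_succ, pow_add, pow_zero, mul_one] at h1 h2 h3 h4 h5
  have key := xiValue_scalar_geometric (x := x) ha₁ ha₂ ht hu hv hw hvt h1 h2 h3 h4 h5
  have hY : qPoch (x / (a₂ * t ^ (q + 1))) t (i + 1) =
      (1 - x / (a₂ * (t ^ q * t))) * qPoch (x / (a₂ * t ^ q)) t i := by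
    rw [qPoch_succ_left, pow_succ]
    congr 2
    field_simp
  have hD : qPoch (a₂ * t ^ q / (a₁ * t ^ (i + 1))) t p =
      qPoch (a₂ * t ^ q / (a₁ * t ^ i)) t p * ((1 - a₂ * t ^ q / (a₁ * (t ^ i * t))) /
        (1 - t ^ p * (a₂ * t ^ q / (a₁ * (t ^ i * t))))) := by
    rw [pow_succ, qPoch_eq_shift]
    · congr 2
      field_simp
    · refine one_sub_mul_div_ne_zero (by positivity) ?_
      convert h3 using 1
      ring
  have hF : qPoch (a₁ / (a₂ * t ^ (p + q))) t (i + 1) =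
      qPoch (a₁ / (a₂ * (t ^ p * t ^ q * t))) t i *
        ((1 - t ^ i * (a₁ / (a₂ * (t ^ p * t ^ q * t)))) *
          (1 - t ^ i * t * (a₁ / (a₂ * (t ^ p * t ^ q * t)))) /
            (1 - a₁ / (a₂ * (t ^ p * t ^ q * t)))) := by
    rw [← qPoch_shift_succ]
    · congr 1
      field_simp
      ring
    · have := one_sub_mul_div_ne_zero (a := a₁) (b := a₂ * (t ^ p * t ^ q * t)) (c := 1)
        (by positivity) (by rw [one_mul]; exact sub_ne_zero.2 (sub_ne_zero.1 h5).symm)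
      rwa [one_mul] at this
  have hd : a₂ * t ^ (q + 1) / (a₁ * t ^ (i + 1)) = a₂ * t ^ q / (a₁ * t ^ i) := by
    field_simp
    ring
  have hb1 : t ^ (p + (q + 1)) = t ^ p * t ^ q * t := by ring
  have hb2 : t ^ (p + 1 + q) = t ^ p * t ^ q * t := by ring
  unfold xiValue
  rw [qBinom_pred_right (one_sub_inv_pow_ne_zero hroot), hY, hD, hF, hd, hb1, hb2,
    qPoch_succ (x / a₁), qPoch_succ (a₂ * t ^ q / (a₁ * t ^ i)),
    qPoch_succ (x / (a₂ * t ^ q)), qPoch_succ (a₁ / (a₂ * (t ^ p * t ^ q * t)))]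
  simp only [inv_pow, pow_succ t, pow_add t]
  generalize 1 - x / (a₂ * (t ^ q * t)) = k0 at key ⊢
  generalize 1 - t ^ i * (a₁ / (a₂ * (t ^ p * t ^ q * t))) = k1 at key ⊢
  generalize 1 - t ^ p * (a₂ * t ^ q / (a₁ * t ^ i)) = k2 at key ⊢
  generalize 1 - t ^ p * (a₂ * t ^ q / (a₁ * (t ^ i * t))) = k3 at key ⊢
  generalize 1 - a₂ * t ^ q / (a₁ * (t ^ i * t)) = k4 at key ⊢
  generalize 1 - t ^ i * t * (a₁ / (a₂ * (t ^ p * t ^ q * t))) = k5 at key ⊢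
  generalize 1 - a₁ / (a₂ * (t ^ p * t ^ q * t)) = k6 at key ⊢
  generalize 1 - t ^ p * (x / a₁) = k7 at key ⊢
  generalize 1 - t ^ i * (x / (a₂ * t ^ q)) = k8 at key ⊢
  generalize 1 - (t ^ p * t)⁻¹ = k9 at key ⊢
  generalize 1 - (t ^ i * t)⁻¹ = k10 at key ⊢
  generalize a₁ * t ^ i - a₂ * (t ^ p * t ^ q * t) = k11 at key ⊢
  generalize a₂ * (t ^ p * t ^ q) - a₁ * (t ^ i * t) = k12 at key ⊢
  generalize qPoch (x / a₁) t p = f0, qPoch (x / (a₂ * t ^ q)) t i = f1,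
    qPoch (a₂ * t ^ q / (a₁ * t ^ i)) t p = f2, qPoch (a₁ / (a₂ * (t ^ p * t ^ q * t))) t i = f3,
    qBinom t⁻¹ (i + 1 + p) (i + 1) = f4
  linear_combination (f4 * (f0 * f1 / (f2 * f3))) * key

lemma xiValue_geometric_zero (ha₁ : a₁ ≠ 0)
    (hgen : ∀ k l : ℤ, a₁ * t ^ k ≠ a₂ * t ^ l) (hroot : ∀ m : ℤ, m ≠ 0 → t ^ m ≠ 1)
    (p q : ℕ) :
    xiValue a₁ a₂ t x 0 p (q + 1) =
      (a₂ * t ^ q - a₁) / (a₂ * t ^ (p + q) - a₁) * xiValue a₁ a₂ t x 0 p q := by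
  have h1 := sub_ne_zero_of_generic hgen 0 q
  have h2 := sub_ne_zero_of_generic hgen 0 (p + q)
  rw [pow_zero, mul_one] at h1 h2
  have e1 : 1 - t ^ p * (a₂ * t ^ q / a₁) = (a₁ - a₂ * t ^ (p + q)) / a₁ := by
    rw [pow_add]
    field_simp
  have e2 : 1 - a₂ * t ^ q / a₁ = (a₁ - a₂ * t ^ q) / a₁ := by field_simp
  have e3 : a₂ * t ^ q - a₁ = -(a₁ - a₂ * t ^ q) := by ring
  have e4 : a₂ * t ^ (p + q) - a₁ = -(a₁ - a₂ * t ^ (p + q)) := by ring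
  have hD := qPoch_eq_shift (a₂ * t ^ q / a₁) t p (by rw [e1]; exact div_ne_zero h2 ha₁)
  rw [show t * (a₂ * t ^ q / a₁) = a₂ * t ^ (q + 1) / a₁ by ring, e1, e2] at hD
  simp only [xiValue, qPoch_zero, pow_zero, mul_one, zero_add,
    qBinom_zero_right (one_sub_inv_pow_ne_zero hroot), one_mul, e3, e4]
  rw [hD]
  generalize a₁ - a₂ * t ^ q = k1 at *
  generalize a₁ - a₂ * t ^ (p + q) = k2 at *
  field_simp

lemma xiValue_full_succ_succ (ha₁ : a₁ ≠ 0) (ha₂ : a₂ ≠ 0) (ht : t ≠ 0)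
    (hgen : ∀ k l : ℤ, a₁ * t ^ k ≠ a₂ * t ^ l) (hroot : ∀ m : ℤ, m ≠ 0 → t ^ m ≠ 1)
    (i p : ℕ) :
    xiValue a₁ a₂ t x (i + 1) (p + 1) 0 =
      (x * t ^ (i + p + 1) - a₂ * t ^ (p + 1)) / (a₁ * t ^ i - a₂ * t ^ (p + 1)) *
          xiValue a₁ a₂ t x i (p + 1) 0 +
        (x * t ^ (i + p + 1) - a₁ * t ^ (i + 1)) / (a₂ * t ^ p - a₁ * t ^ (i + 1)) *
          xiValue a₁ a₂ t x (i + 1) p 0 := by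
  have hg := sub_ne_zero_of_generic hgen
  have hu := pow_ne_zero i ht
  have hv := pow_ne_zero p ht
  have hvt : t ^ p * t - 1 ≠ 0 := by
    rw [← pow_succ]
    exact sub_ne_zero.2 (mod_cast hroot (p + 1 : ℕ) (by omega))
  have h1 := hg i (p + 1)
  have h2 := hg i p
  have h3 := hg (i + 1) p
  have h4 := hg (i + 1) 0
  have h5 := hg 0 (p + 1)
  simp only [pow_succ, pow_zero, mul_one] at h1 h2 h3 h4 h5
  have key := xiValue_scalar_full (x := x) ha₁ ha₂ ht hu hv hvt h1 h2 h3 h4 h5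
  have hd : t * (a₂ / (a₁ * (t ^ i * t))) = a₂ / (a₁ * t ^ i) := by field_simp
  have hD : qPoch (a₂ / (a₁ * t ^ (i + 1))) t p =
      qPoch (a₂ / (a₁ * t ^ i)) t p * ((1 - a₂ / (a₁ * (t ^ i * t))) /
        (1 - t ^ p * (a₂ / (a₁ * (t ^ i * t))))) := by
    rw [pow_succ, qPoch_eq_shift, hd]
    refine one_sub_mul_div_ne_zero (by positivity) ?_
    convert h3 using 1
    ring
  have hD' : qPoch (a₂ / (a₁ * t ^ (i + 1))) t (p + 1) =
      (1 - a₂ / (a₁ * (t ^ i * t))) * qPoch (a₂ / (a₁ * t ^ i)) t p := by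
    rw [qPoch_succ_left, pow_succ, hd]
  have hF : qPoch (a₁ / (a₂ * t ^ p)) t (i + 1) =
      qPoch (a₁ / (a₂ * (t ^ p * t))) t i *
        ((1 - t ^ i * (a₁ / (a₂ * (t ^ p * t)))) *
          (1 - t ^ i * t * (a₁ / (a₂ * (t ^ p * t)))) /
            (1 - a₁ / (a₂ * (t ^ p * t)))) := by
    rw [← qPoch_shift_succ]
    · congr 1
      field_simp
    · have := one_sub_mul_div_ne_zero (a := a₁) (b := a₂ * (t ^ p * t)) (c := 1)
        (by positivity) (by rw [one_mul]; exact sub_ne_zero.2 (sub_ne_zero.1 h5).symm)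
      rwa [one_mul] at this
  have hb : t ^ (p + 1) = t ^ p * t := pow_succ _ _
  unfold xiValue
  simp only [pow_zero, mul_one, add_zero]
  have hc := one_sub_inv_pow_ne_zero hroot
  rw [qBinom_succ_left hc (i + 1) p, qBinom_pred_right hc i p, hD, hD', hF, hb,
    qPoch_succ (x / a₁), qPoch_succ (a₂ / (a₁ * t ^ i)),
    qPoch_succ (x / a₂), qPoch_succ (a₁ / (a₂ * (t ^ p * t)))]
  simp only [inv_pow, pow_succ t, pow_add t]
  generalize 1 - (t ^ i * t * t ^ p * t)⁻¹ = k0 at key ⊢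
  generalize 1 - t ^ i * (a₁ / (a₂ * (t ^ p * t))) = k1 at key ⊢
  generalize 1 - t ^ p * (a₂ / (a₁ * t ^ i)) = k2 at key ⊢
  generalize 1 - t ^ p * (a₂ / (a₁ * (t ^ i * t))) = k3 at key ⊢
  generalize 1 - a₂ / (a₁ * (t ^ i * t)) = k4 at key ⊢
  generalize 1 - t ^ i * t * (a₁ / (a₂ * (t ^ p * t))) = k5 at key ⊢
  generalize 1 - a₁ / (a₂ * (t ^ p * t)) = k6 at key ⊢
  generalize 1 - t ^ p * (x / a₁) = k7 at key ⊢
  generalize 1 - t ^ i * (x / a₂) = k8 at key ⊢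
  generalize 1 - (t ^ p * t)⁻¹ = k9 at key ⊢
  generalize 1 - (t ^ i * t)⁻¹ = k10 at key ⊢
  generalize a₁ * t ^ i - a₂ * (t ^ p * t) = k11 at key ⊢
  generalize a₂ * t ^ p - a₁ * (t ^ i * t) = k12 at key ⊢
  generalize qPoch (x / a₁) t p = f0, qPoch (x / a₂) t i = f1,
    qPoch (a₂ / (a₁ * t ^ i)) t p = f2, qPoch (a₁ / (a₂ * (t ^ p * t))) t i = f3,
    qBinom t⁻¹ (i + 1 + p) (i + 1) = f4
  linear_combination (f4 * (f0 * f1 / (f2 * f3))) * key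

lemma xiValue_full_zero_succ (ha₁ : a₁ ≠ 0)
    (hroot : ∀ m : ℤ, m ≠ 0 → t ^ m ≠ 1) (p : ℕ) :
    xiValue a₁ a₂ t x 0 (p + 1) 0 =
      (x * t ^ p - a₁) / (a₂ * t ^ p - a₁) * xiValue a₁ a₂ t x 0 p 0 := by
  simp only [xiValue, qPoch_zero, pow_zero, mul_one, zero_add,
    qBinom_zero_right (one_sub_inv_pow_ne_zero hroot), one_mul, qPoch_succ]
  rw [show x * t ^ p - a₁ = -a₁ * (1 - t ^ p * (x / a₁)) by field_simp; ring,
    show a₂ * t ^ p - a₁ = -a₁ * (1 - t ^ p * (a₂ / a₁)) by field_simp; ring,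
    mul_div_mul_left _ _ (neg_ne_zero.2 ha₁), div_mul_div_comm, mul_comm (1 - _),
    mul_comm (1 - _)]

lemma xiValue_full_succ_zero (ha₂ : a₂ ≠ 0)
    (hroot : ∀ m : ℤ, m ≠ 0 → t ^ m ≠ 1) (i : ℕ) :
    xiValue a₁ a₂ t x (i + 1) 0 0 =
      (x * t ^ i - a₂) / (a₁ * t ^ i - a₂) * xiValue a₁ a₂ t x i 0 0 := by
  simp only [xiValue, qPoch_zero, pow_zero, mul_one, add_zero,
    qBinom_self (one_sub_inv_pow_ne_zero hroot), one_mul, qPoch_succ]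
  rw [show x * t ^ i - a₂ = -a₂ * (1 - t ^ i * (x / a₂)) by field_simp; ring,
    show a₁ * t ^ i - a₂ = -a₂ * (1 - t ^ i * (a₁ / a₂)) by field_simp; ring,
    mul_div_mul_left _ _ (neg_ne_zero.2 ha₂), div_mul_div_comm, mul_comm (1 - _),
    mul_comm (1 - _)]

end Scalar

lemma lagrangeF_eq_xiValue {a₁ a₂ t x : ℂ} (ha₁ : a₁ ≠ 0) (ha₂ : a₂ ≠ 0) (ht : t ≠ 0)
    (hgen : ∀ k l : ℤ, a₁ * t ^ k ≠ a₂ * t ^ l) (hroot : ∀ m : ℤ, m ≠ 0 → t ^ m ≠ 1)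
    (n i j : ℕ) (hj : j ≤ n) (z : ℕ → ℂ)
    (hz : ∀ k, 1 ≤ k → k ≤ n → z k = xiXNode x a₂ t j k) :
    lagrangeF a₁ a₂ t n i z =
      if i ≤ j then xiValue a₁ a₂ t x i (j - i) (n - j) else 0 := by
  induction n generalizing i j with
  | zero =>
    obtain rfl : j = 0 := by omega
    rcases i with _ | i
    · simp [lagrangeF, xiValue, qPoch_zero, qBinom]
    · rw [lagrangeF_eq_zero (by omega), if_neg (by omega)]
  | succ n ih =>
    rcases hj.lt_or_eq with hj | rfl
    · have ih' := fun i => ih i j (by omega) fun k h h' => hz k h (by omega)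
      obtain ⟨q, rfl⟩ := Nat.exists_eq_add_of_le (Nat.lt_succ_iff.1 hj)
      have hlast : z (j + q + 1) = a₂ * t ^ q := by
        rw [hz _ (by omega) le_rfl, xiXNode, if_neg (by omega),
          show j + q + 1 - j - 1 = q by omega]
      rcases i with _ | i
      · rw [lagrangeF_succ_zero, hlast, ih', if_pos (by omega), if_pos (by omega), Nat.sub_zero,
          show j + q + 1 - j = q + 1 by omega, show j + q - j = q by omega,
          xiValue_geometric_zero ha₁ hgen hroot]
      · rw [lagrangeF_succ_succ, hlast, ih', ih']
        rcases lt_trichotomy i j with h | rfl | h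
        · obtain ⟨p, rfl⟩ := Nat.exists_eq_add_of_lt h
          rw [if_pos (by omega), if_pos (by omega), if_pos (by omega),
            show i + p + 1 - i = p + 1 by omega, show i + p + 1 - (i + 1) = p by omega,
            show i + p + 1 + q - (i + 1) = p + q by omega,
            show i + p + 1 + q - i = p + q + 1 by omega,
            show i + p + 1 + q + 1 - (i + p + 1) = q + 1 by omega,
            show i + p + 1 + q - (i + p + 1) = q by omega,
            xiValue_geometric_succ ha₁ ha₂ ht hgen hroot]
        · rw [if_pos le_rfl, if_neg (by omega), if_neg (by omega), show i + q - i = q by omega]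
          simp
        · rw [if_neg (by omega), if_neg (by omega), if_neg (by omega)]
          simp
    · have ih' := fun i => ih i n le_rfl fun k h h' => by
        rw [hz k h (by omega), xiXNode, xiXNode, if_pos (by omega), if_pos h']
      have hlast : z (n + 1) = x * t ^ n := by
        rw [hz _ (by omega) le_rfl, xiXNode, if_pos le_rfl, Nat.add_sub_cancel]
      rcases i with _ | i
      · rw [lagrangeF_succ_zero, hlast, ih', if_pos (by omega), if_pos (by omega), Nat.sub_zero,
          Nat.sub_zero, Nat.sub_self, Nat.sub_self, xiValue_full_zero_succ ha₁ hroot]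
      · rw [lagrangeF_succ_succ, hlast, ih', ih']
        rcases lt_trichotomy i n with h | rfl | h
        · obtain ⟨p, rfl⟩ := Nat.exists_eq_add_of_lt h
          rw [if_pos (by omega), if_pos (by omega), if_pos (by omega),
            show i + p + 1 - i = p + 1 by omega, show i + p + 1 - (i + 1) = p by omega,
            show i + p + 1 + 1 - (i + 1) = p + 1 by omega, Nat.sub_self, Nat.sub_self,
            xiValue_full_succ_succ ha₁ ha₂ ht hgen hroot]
        · rw [if_pos le_rfl, if_pos le_rfl, if_neg (by omega), Nat.sub_self, Nat.sub_self,
            xiValue_full_succ_zero ha₂ hroot]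
          simp
        · rw [if_neg (by omega), if_neg (by omega), if_neg (by omega)]
          simp

/-- Evaluation of the Lagrange interpolation polynomial of type A at ξ_j(x,a₂;t);
in particular the left side vanishes when i > j. -/
theorem lagrange_eval_xi (n i j : ℕ) (hi : i ≤ n) (hj : j ≤ n) (a₁ a₂ t x : ℂ)
    (ha₁ : a₁ ≠ 0) (ha₂ : a₂ ≠ 0) (ht : t ≠ 0) (hx : x ≠ 0)
    (hgen : ∀ k l : ℤ, a₁ * t ^ k ≠ a₂ * t ^ l)
    (hroot : ∀ m : ℤ, m ≠ 0 → t ^ m ≠ 1) :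
    lagrangeF a₁ a₂ t n i (xiXNode x a₂ t j) =
      qBinom t⁻¹ j i * (qPoch (x * a₁⁻¹) t (j - i) * qPoch (x * a₂⁻¹ * (t⁻¹) ^ (n - j)) t i /
        (qPoch (a₁⁻¹ * a₂ * t ^ ((n : ℤ) - j - i)) t (j - i) *
          qPoch (a₁ * a₂⁻¹ * (t⁻¹) ^ (n - i)) t i)) := by
  rw [lagrangeF_eq_xiValue ha₁ ha₂ ht hgen hroot n i j hj _ fun _ _ _ => rfl]
  split_ifs with h
  · obtain ⟨p, rfl⟩ := Nat.exists_eq_add_of_le h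
    obtain ⟨q, rfl⟩ := Nat.exists_eq_add_of_le hj
    have hz : t ^ (((i + p + q : ℕ) : ℤ) - (i + p : ℕ) - i) = t ^ q / t ^ i := by
      rw [← zpow_natCast, ← zpow_natCast, ← zpow_sub₀ ht]
      congr 1
      push_cast
      ring
    rw [hz, xiValue, show i + p - i = p by omega, show i + p + q - (i + p) = q by omega,
      show i + p + q - i = p + q by omega]
    have e1 : x * a₁⁻¹ = x / a₁ := rfl
    have e2 : x * a₂⁻¹ * t⁻¹ ^ q = x / (a₂ * t ^ q) := by rw [inv_pow]; field_simp
    have e3 : a₁⁻¹ * a₂ * (t ^ q / t ^ i) = a₂ * t ^ q / (a₁ * t ^ i) := by field_simp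
    have e4 : a₁ * a₂⁻¹ * t⁻¹ ^ (p + q) = a₁ / (a₂ * t ^ (p + q)) := by rw [inv_pow]; field_simp
    rw [e1, e2, e3, e4]
  · rw [qBinom, if_neg h, zero_mul]
end
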